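/- Assume Conditions 10, 11 and 12 hold. Then there is a constant C < ∞ such that for every n ∈ ℕ: sup_{θ∈int Θ} ‖∇M_n(θ)‖ ≤ C (1/n) ‖y^{(n)}‖², sup_{θ∈int Θ} ρ₁(∇²M_n(θ)) ≤ C (1/n) ‖y^{(n)}‖², and sup_{θ∈int Θ} max_{j,k,ℓ=1,…,p} |∂³M_n(θ)/∂θ_j∂θ_k∂θ_ℓ| ≤ C (1/n) ‖y^{(n)}‖², where ρ₁ denotes the largest singular value. -/

import Mathlib

open MeasureTheory ProbabilityTheory Set Matrix

noncomputable section

/-- `ℝ^p` with the Euclidean norm. -/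
abbrev Euc (p : ℕ) := EuclideanSpace ℝ (Fin p)

/-- Build a Euclidean vector from a plain function. -/
def toEuc {p : ℕ} (v : Fin p → ℝ) : Euc p := (WithLp.equiv 2 (Fin p → ℝ)).symm v

/-- The standard Gaussian distribution on `ℝ^p`. -/
def stdGaussian (p : ℕ) : Measure (Euc p) :=
  (Measure.pi fun _ : Fin p => gaussianReal 0 1).map (toEuc (p := p))

/-- The `L¹` Wasserstein distance between two distributions on `ℝ^p`
(dual formulation: supremum over `1`-Lipschitz test functions). -/
def W1 {p : ℕ} (P Q : Measure (Euc p)) : ℝ :=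
  sSup { r | ∃ f : Euc p → ℝ, LipschitzWith 1 f ∧
    r = |(∫ x, f x ∂P) - (∫ x, f x ∂Q)| }

/-- Partial derivative in the `i`-th coordinate direction. -/
def pder {p : ℕ} (i : Fin p) (f : Euc p → ℝ) (θ : Euc p) : ℝ :=
  fderiv ℝ f θ (EuclideanSpace.single i 1)

/-- The gradient as a Euclidean vector. -/
def gradVec {p : ℕ} (f : Euc p → ℝ) (θ : Euc p) : Euc p := toEuc fun i => pder i f θ

/-- The correlation matrix `R_{n,θ}` with entries `k_θ(x_i − x_j)`. -/
def Rmat {d p : ℕ} (x : ℕ → Euc d) (kern : Euc p → Euc d → ℝ) (n : ℕ) (θ : Euc p) :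
    Matrix (Fin n) (Fin n) ℝ :=
  Matrix.of fun i j => kern θ (x i - x j)

/-- `diag(M)`: set the off-diagonal entries of `M` to zero. -/
def diagPart {n : ℕ} (A : Matrix (Fin n) (Fin n) ℝ) : Matrix (Fin n) (Fin n) ℝ :=
  Matrix.diagonal A.diag

/-- The leave-one-out cross-validation criterion
`M_n(θ) = (1/n) yᵀ R_{n,θ}⁻¹ diag(R_{n,θ}⁻¹)⁻² R_{n,θ}⁻¹ y`. -/
def CVcrit {d p : ℕ} (x : ℕ → Euc d) (kern : Euc p → Euc d → ℝ) (n : ℕ)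
    (y : Fin n → ℝ) (θ : Euc p) : ℝ :=
  (1 / n) *
    (y ⬝ᵥ ((Rmat x kern n θ)⁻¹ * ((diagPart ((Rmat x kern n θ)⁻¹))⁻¹) ^ 2 *
      (Rmat x kern n θ)⁻¹).mulVec y)

/-- `opBound A C` means that the largest singular value of `A` is at most `C`. -/
def opBound {n : ℕ} (A : Matrix (Fin n) (Fin n) ℝ) (C : ℝ) : Prop :=
  ∀ v : Fin n → ℝ,
    Real.sqrt (∑ i, A.mulVec v i ^ 2) ≤ C * Real.sqrt (∑ i, v i ^ 2)

section CVhelpers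

open scoped Matrix.Norms.L2Operator

/-- uniformly bounded derivatives up to order `m` of a family of functions. -/
def UB {ι : Type} {p : ℕ} (U : Set (Euc p)) (A : ι → Type) [∀ i, NormedAddCommGroup (A i)]
    [∀ i, NormedSpace ℝ (A i)] : ℕ → (∀ i, Euc p → A i) → Prop
  | 0, F => ∃ K : ℝ, ∀ i, ∀ θ ∈ U, ‖F i θ‖ ≤ K
  | m + 1, F => (∃ K : ℝ, ∀ i, ∀ θ ∈ U, ‖F i θ‖ ≤ K) ∧
      (∀ i, ∀ θ ∈ U, DifferentiableAt ℝ (F i) θ) ∧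
      ∀ j : Fin p, UB U A m (fun i θ => fderiv ℝ (F i) θ (EuclideanSpace.single j 1))

section general
variable {ι : Type} {p : ℕ} {U : Set (Euc p)} {A : ι → Type}

section add
variable [∀ i, NormedAddCommGroup (A i)] [∀ i, NormedSpace ℝ (A i)]

theorem UB.bdd {m : ℕ} {F : ∀ i, Euc p → A i} (h : UB U A m F) :
    ∃ K : ℝ, ∀ i, ∀ θ ∈ U, ‖F i θ‖ ≤ K := by
  cases m with
  | zero => exact h
  | succ m => exact h.1

theorem UB.pred {m : ℕ} : ∀ {F : ∀ i, Euc p → A i}, UB U A (m+1) F → UB U A m F := by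
  induction m with
  | zero => intro F h; exact h.1
  | succ m ih => intro F h; exact ⟨h.1, h.2.1, fun j => ih (h.2.2 j)⟩

theorem UB.congr (hU : IsOpen U) {m : ℕ} : ∀ {F G : ∀ i, Euc p → A i}, UB U A m F →
    (∀ i, ∀ θ ∈ U, F i θ = G i θ) → UB U A m G := by
  induction m with
  | zero =>
    rintro F G ⟨K, h⟩ e
    exact ⟨K, fun i θ hθ => by rw [← e i θ hθ]; exact h i θ hθ⟩
  | succ m ih =>
    rintro F G ⟨⟨K, h⟩, hd, hj⟩ e
    have ev : ∀ i, ∀ θ ∈ U, G i =ᶠ[nhds θ] F i := fun i θ hθ => by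
      filter_upwards [hU.mem_nhds hθ] with t ht
      exact (e i t ht).symm
    refine ⟨⟨K, fun i θ hθ => by rw [← e i θ hθ]; exact h i θ hθ⟩, fun i θ hθ =>
      (ev i θ hθ).differentiableAt_iff.2 (hd i θ hθ), fun j => ih (hj j) ?_⟩
    intro i θ hθ
    rw [(ev i θ hθ).fderiv_eq]

theorem UB.add (hU : IsOpen U) {m : ℕ} : ∀ {F G : ∀ i, Euc p → A i}, UB U A m F →
    UB U A m G → UB U A m (fun i θ => F i θ + G i θ) := by
  induction m with
  | zero =>
    rintro F G ⟨K, h⟩ ⟨L, h'⟩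
    exact ⟨K + L, fun i θ hθ => (norm_add_le _ _).trans (add_le_add (h i θ hθ) (h' i θ hθ))⟩
  | succ m ih =>
    rintro F G ⟨⟨K, h⟩, hd, hj⟩ ⟨⟨L, h'⟩, hd', hj'⟩
    refine ⟨⟨K + L, fun i θ hθ => (norm_add_le _ _).trans
      (add_le_add (h i θ hθ) (h' i θ hθ))⟩, fun i θ hθ => (hd i θ hθ).add (hd' i θ hθ),
      fun j => (ih (hj j) (hj' j)).congr hU ?_⟩
    intro i θ hθ
    rw [fderiv_fun_add (hd i θ hθ) (hd' i θ hθ)]; rfl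

theorem UB.clm (hU : IsOpen U) (L : ∀ i, A i →L[ℝ] A i) {M : ℝ}
    (hL : ∀ i a, ‖L i a‖ ≤ M * ‖a‖) (hM : 0 ≤ M) {m : ℕ} : ∀ {F : ∀ i, Euc p → A i}, UB U A m F →
    UB U A m (fun i θ => L i (F i θ)) := by
  induction m with
  | zero =>
    rintro F ⟨K, h⟩
    exact ⟨M * K, fun i θ hθ => (hL i _).trans (mul_le_mul_of_nonneg_left (h i θ hθ) hM)⟩
  | succ m ih =>
    rintro F ⟨⟨K, h⟩, hd, hj⟩
    refine ⟨⟨M * K, fun i θ hθ => (hL i _).trans (mul_le_mul_of_nonneg_left (h i θ hθ) hM)⟩,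
      fun i θ hθ => ((L i).differentiableAt).comp θ (hd i θ hθ),
      fun j => (ih (hj j)).congr hU ?_⟩
    intro i θ hθ
    have h := (L i).hasFDerivAt.comp θ (hd i θ hθ).hasFDerivAt
    exact (DFunLike.congr_fun h.fderiv _).symm

end add

section mul
variable [∀ i, NormedRing (A i)] [∀ i, NormedAlgebra ℝ (A i)]

theorem UB.mul (hU : IsOpen U) {m : ℕ} : ∀ {F G : ∀ i, Euc p → A i}, UB U A m F →
    UB U A m G → UB U A m (fun i θ => F i θ * G i θ) := by
  have key : ∀ {F G : ∀ i, Euc p → A i} {K L : ℝ}, (∀ i, ∀ θ ∈ U, ‖F i θ‖ ≤ K) →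
     (∀ i, ∀ θ ∈ U, ‖G i θ‖ ≤ L) → ∀ i, ∀ θ ∈ U, ‖F i θ * G i θ‖ ≤ K * L := by
    intro F G K L h h' i θ hθ
    exact (norm_mul_le _ _).trans (mul_le_mul (h i θ hθ) (h' i θ hθ) (norm_nonneg _)
      ((norm_nonneg _).trans (h i θ hθ)))
  induction m with
  | zero =>
    rintro F G ⟨K, h⟩ ⟨L, h'⟩
    exact ⟨K * L, key h h'⟩
  | succ m ih =>
    intro F G hF hG
    obtain ⟨⟨K, h⟩, hd, hj⟩ := hF
    obtain ⟨⟨L, h'⟩, hd', hj'⟩ := hG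
    have hF : UB U A (m+1) F := ⟨⟨K, h⟩, hd, hj⟩
    have hG : UB U A (m+1) G := ⟨⟨L, h'⟩, hd', hj'⟩
    refine ⟨⟨K * L, key h h'⟩, fun i θ hθ => (hd i θ hθ).mul (hd' i θ hθ),
      fun j => ((ih hF.pred (hj' j)).add hU (ih (hj j) hG.pred)).congr hU ?_⟩
    intro i θ hθ
    rw [fderiv_fun_mul' (hd i θ hθ) (hd' i θ hθ)]
    simp

theorem UB.inv [∀ i, CompleteSpace (A i)] (hU : IsOpen U) {F G : ∀ i, Euc p → A i}
    (h1 : ∀ i, ∀ θ ∈ U, F i θ * G i θ = 1) (h2 : ∀ i, ∀ θ ∈ U, G i θ * F i θ = 1)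
    (hG : ∃ K : ℝ, ∀ i, ∀ θ ∈ U, ‖G i θ‖ ≤ K) {m : ℕ} : UB U A m F → UB U A m G := by
  induction m with
  | zero => intro _; exact hG
  | succ m ih =>
    intro hF
    have ihG := ih hF.pred
    have hder : ∀ i, ∀ θ ∈ U, HasFDerivAt (G i)
        ((-ContinuousLinearMap.mulLeftRight ℝ (A i) (G i θ) (G i θ)).comp (fderiv ℝ (F i) θ)) θ := by
      intro i θ hθ
      have e : G i =ᶠ[nhds θ] fun t => Ring.inverse (F i t) := by
        filter_upwards [hU.mem_nhds hθ] with t ht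
        exact (Ring.inverse_unit (⟨F i t, G i t, h1 i t ht, h2 i t ht⟩ : (A i)ˣ)).symm
      refine HasFDerivAt.congr_of_eventuallyEq ?_ e
      have := hasFDerivAt_ringInverse (𝕜 := ℝ)
        (⟨F i θ, G i θ, h1 i θ hθ, h2 i θ hθ⟩ : (A i)ˣ)
      exact HasFDerivAt.comp (g := Ring.inverse) θ this (hF.2.1 i θ hθ).hasFDerivAt
    refine ⟨hG, fun i θ hθ => (hder i θ hθ).differentiableAt, fun j => ?_⟩
    have hb := (((ihG.mul hU (hF.2.2 j)).mul hU ihG).clm hU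
      (fun i => -ContinuousLinearMap.id ℝ (A i)) (M := 1) (by intro i a; simp) zero_le_one)
    refine hb.congr hU ?_
    intro i θ hθ
    rw [(hder i θ hθ).fderiv]
    simp

end mul
end general

theorem schur_opBound {n : ℕ} (A : Matrix (Fin n) (Fin n) ℝ) {K : ℝ} (hK : 0 ≤ K)
    (hr : ∀ i, ∑ j, |A i j| ≤ K) (hc : ∀ j, ∑ i, |A i j| ≤ K) : opBound A K := by
  intro v
  have h : ∑ i, A.mulVec v i ^ 2 ≤ K ^ 2 * ∑ i, v i ^ 2 := by
    calc ∑ i, A.mulVec v i ^ 2 ≤ ∑ i, K * ∑ j, |A i j| * v j ^ 2 := by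
          refine Finset.sum_le_sum fun i _ => ?_
          have := Finset.sum_sq_le_sum_mul_sum_of_sq_le_mul Finset.univ
            (r := fun j => A i j * v j) (f := fun j => |A i j|) (g := fun j => |A i j| * v j ^ 2)
            (fun j _ => abs_nonneg _) (fun j _ => by positivity)
            (fun j _ => by rw [mul_pow, ← sq_abs (A i j)]; exact le_of_eq (by ring))
          refine (this.trans (mul_le_mul_of_nonneg_right (hr i) ?_))
          exact Finset.sum_nonneg fun j _ => by positivity
      _ = K * ∑ j, (∑ i, |A i j|) * v j ^ 2 := by
          rw [← Finset.mul_sum, Finset.sum_comm]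
          simp_rw [Finset.sum_mul]
      _ ≤ K * ∑ j, K * v j ^ 2 := by
          refine mul_le_mul_of_nonneg_left (Finset.sum_le_sum fun j _ => ?_) hK
          exact mul_le_mul_of_nonneg_right (hc j) (sq_nonneg _)
      _ = K ^ 2 * ∑ i, v i ^ 2 := by rw [← Finset.mul_sum]; ring
  calc _ ≤ √(K ^ 2 * ∑ i, v i ^ 2) := Real.sqrt_le_sqrt h
    _ = _ := by rw [Real.sqrt_mul (sq_nonneg _), Real.sqrt_sq hK]

theorem norm_le_of_opBound {n : ℕ} (A : Matrix (Fin n) (Fin n) ℝ) {K : ℝ} (hK : 0 ≤ K)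
    (h : opBound A K) : ‖A‖ ≤ K := by
  rw [← Matrix.l2_opNorm_toEuclideanCLM]
  refine ContinuousLinearMap.opNorm_le_bound _ hK fun v => ?_
  have := h v.ofLp
  rw [EuclideanSpace.norm_eq, EuclideanSpace.norm_eq]
  simpa [Matrix.ofLp_toEuclideanCLM] using this

theorem opBound_norm {n : ℕ} (A : Matrix (Fin n) (Fin n) ℝ) : opBound A ‖A‖ := by
  intro v
  have := Matrix.l2_opNorm_mulVec A (WithLp.toLp 2 v)
  rw [EuclideanSpace.norm_eq, EuclideanSpace.norm_eq] at this
  simpa using this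

theorem dot_le {n : ℕ} (v w : Fin n → ℝ) :
    |v ⬝ᵥ w| ≤ √(∑ i, v i ^ 2) * √(∑ i, w i ^ 2) := by
  rw [← Real.sqrt_mul (Finset.sum_nonneg fun i _ => sq_nonneg _)]
  exact Real.abs_le_sqrt (Finset.sum_mul_sq_le_sq_mul_sq _ _ _)

theorem quad_le {n : ℕ} (A : Matrix (Fin n) (Fin n) ℝ) (v : Fin n → ℝ) :
    |v ⬝ᵥ A.mulVec v| ≤ ‖A‖ * ∑ i, v i ^ 2 := by
  refine (dot_le _ _).trans ?_
  refine (mul_le_mul_of_nonneg_left (opBound_norm A v) (Real.sqrt_nonneg _)).trans_eq ?_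
  have := Real.mul_self_sqrt (Finset.sum_nonneg fun i (_ : i ∈ Finset.univ) => sq_nonneg (v i))
  linear_combination ‖A‖ * this

theorem entry_le {n : ℕ} (A : Matrix (Fin n) (Fin n) ℝ) (i : Fin n) : |A i i| ≤ ‖A‖ := by
  have := quad_le A (Pi.single i 1)
  simpa [Pi.single_apply] using this

theorem packing {d : ℕ} (x : ℕ → Euc d) (cx : ℝ) (hcx : 0 < cx)
    (hmindist : ∀ i j : ℕ, i ≠ j → cx ≤ ‖x i - x j‖) (s : ℝ) (hs : (d : ℝ) < s) :
    ∃ K : ℝ, 0 ≤ K ∧ ∀ (n : ℕ) (i : ℕ), ∑ j : Fin n, 1 / (1 + ‖x i - x j‖ ^ s) ≤ K := by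
  have hs0 : 0 < s := lt_of_le_of_lt (Nat.cast_nonneg d) hs
  have hint : Integrable (fun z : Euc d => (1 + ‖z‖) ^ (-s)) volume :=
    integrable_one_add_norm (by simpa using hs)
  have hI0 : ∀ z : Euc d, 0 ≤ (1 + ‖z‖) ^ (-s) := fun z => by positivity
  set I := ∫ z : Euc d, (1 + ‖z‖) ^ (-s) with hI
  set V := volume.real (Metric.ball (0 : Euc d) (cx/2)) with hV
  have hVpos : 0 < V := by
    rw [hV, Measure.real, ENNReal.toReal_pos_iff]
    exact ⟨Metric.measure_ball_pos _ _ (by positivity), measure_ball_lt_top⟩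
  have hVx : ∀ a : Euc d, volume.real (Metric.ball a (cx/2)) = V := fun a => by
    rw [hV, Measure.real, Measure.real, Measure.addHaar_ball_center]
  have hInn : 0 ≤ I := integral_nonneg hI0
  refine ⟨2 ^ s * ((1 + cx/2) ^ s * (I / V)), by positivity, fun n i => ?_⟩
  have hinti : Integrable (fun z : Euc d => (1 + ‖x i - z‖) ^ (-s)) volume :=
    hint.comp_sub_left (x i)
  have hpt : ∀ j : Fin n, (1 + ‖x i - x j‖) ^ (-s) * V ≤
      (1 + cx/2) ^ s * ∫ z in Metric.ball (x j) (cx/2), (1 + ‖x i - z‖) ^ (-s) := by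
    intro j
    rw [← integral_const_mul, ← hVx (x j), mul_comm, ← smul_eq_mul, ← setIntegral_const]
    refine setIntegral_mono_on (integrableOn_const (by exact measure_ball_lt_top.ne))
      ((hinti.const_mul _).integrableOn) measurableSet_ball fun z hz => ?_
    rw [Metric.mem_ball, dist_eq_norm] at hz
    have h1 : ‖x i - z‖ ≤ ‖x i - x j‖ + cx/2 := by
      have := norm_sub_le_norm_sub_add_norm_sub (x i) (x j) z
      rw [norm_sub_rev (x j) z] at this
      linarith
    have h2 : 1 + ‖x i - z‖ ≤ (1 + ‖x i - x j‖) * (1 + cx/2) := by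
      nlinarith [norm_nonneg (x i - x j)]
    have h3 := Real.rpow_le_rpow (by positivity) h2 hs0.le
    rw [Real.mul_rpow (by positivity) (by positivity)] at h3
    rw [Real.rpow_neg (by positivity), Real.rpow_neg (by positivity), ← div_eq_mul_inv,
      inv_eq_one_div, div_le_div_iff₀ (by positivity) (by positivity)]
    linarith
  have hsum : ∑ j : Fin n, ∫ z in Metric.ball (x j) (cx/2), (1 + ‖x i - z‖) ^ (-s) ≤ I := by
    rw [← integral_iUnion_fintype (fun j => measurableSet_ball) ?_ (fun j => hinti.integrableOn)]
    · refine (setIntegral_le_integral hinti (Filter.Eventually.of_forall fun z => ?_)).trans_eq ?_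
      · exact hI0 _
      · exact integral_sub_left_eq_self (fun z : Euc d => (1 + ‖z‖) ^ (-s)) volume (x i)
    · intro a b hab
      refine Metric.ball_disjoint_ball ?_
      rw [dist_eq_norm]
      have := hmindist a b (fun h => hab (Fin.ext h))
      linarith
  have hb : ∑ j : Fin n, (1 + ‖x i - x j‖) ^ (-s) ≤ (1 + cx/2) ^ s * (I / V) := by
    rw [← mul_div_assoc, le_div_iff₀ hVpos, Finset.sum_mul]
    refine (Finset.sum_le_sum fun j _ => hpt j).trans ?_
    rw [← Finset.mul_sum]
    exact mul_le_mul_of_nonneg_left hsum (by positivity)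
  refine le_trans ?_ (mul_le_mul_of_nonneg_left hb (by positivity))
  rw [Finset.mul_sum]
  refine Finset.sum_le_sum fun j _ => ?_
  set t := ‖x i - x j‖
  have ht : 0 ≤ t := norm_nonneg _
  rw [Real.rpow_neg (by positivity), ← div_eq_mul_inv, div_le_div_iff₀ (by positivity)
    (by positivity), one_mul]
  rcases le_total t 1 with h | h
  · have := Real.rpow_le_rpow (by positivity) (show 1 + t ≤ 2 by linarith) hs0.le
    have h' : 0 ≤ t ^ s := by positivity
    nlinarith [Real.rpow_nonneg (zero_le_two (α := ℝ)) s]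
  · have := Real.rpow_le_rpow (by positivity) (show 1 + t ≤ 2 * t by linarith) hs0.le
    rw [Real.mul_rpow (by positivity) (by positivity)] at this
    nlinarith [Real.rpow_nonneg (zero_le_two (α := ℝ)) s]

abbrev MatF (n : ℕ) : Type := Matrix (Fin n) (Fin n) ℝ

/-- entrywise version of `UB` with a given weight. -/
def EB {d p : ℕ} (U : Set (Euc p)) (w : Euc d → ℝ) : ℕ → (Euc d → Euc p → ℝ) → Prop
  | 0, f => ∀ z, ∀ θ ∈ U, |f z θ| ≤ w z
  | m + 1, f => (∀ z, ∀ θ ∈ U, |f z θ| ≤ w z) ∧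
      (∀ z, ∀ θ ∈ U, DifferentiableAt ℝ (f z) θ) ∧
      ∀ j : Fin p, EB U w m (fun z => pder j (f z))

theorem UB_of_EB {d p : ℕ} {U : Set (Euc p)} (hU : IsOpen U) (x : ℕ → Euc d) {w : Euc d → ℝ}
    {K : ℝ} (hK : 0 ≤ K) (hr : ∀ (n i : ℕ), ∑ j : Fin n, w (x i - x j) ≤ K)
    (hc : ∀ (n i : ℕ), ∑ j : Fin n, w (x j - x i) ≤ K) {m : ℕ} :
    ∀ {f : Euc d → Euc p → ℝ}, EB U w m f →
    UB U MatF m (fun n θ => Matrix.of fun i j : Fin n => f (x i - x j) θ) := by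
  have key : ∀ {f : Euc d → Euc p → ℝ}, (∀ z, ∀ θ ∈ U, |f z θ| ≤ w z) →
      ∀ n, ∀ θ ∈ U, ‖(Matrix.of fun i j : Fin n => f (x i - x j) θ)‖ ≤ K := by
    intro f h n θ hθ
    refine norm_le_of_opBound _ hK (schur_opBound _ hK (fun i => ?_) fun j => ?_)
    · exact (Finset.sum_le_sum fun j _ => h _ θ hθ).trans (hr n i)
    · exact (Finset.sum_le_sum fun i _ => h _ θ hθ).trans (hc n j)
  induction m with
  | zero => intro f h; exact ⟨K, key h⟩
  | succ m ih =>
    rintro f ⟨h, hd, hj⟩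
    have e : ∀ (g : Euc d → Euc p → ℝ) (n : ℕ) (θ : Euc p),
        (Matrix.of fun i j : Fin n => g (x i - x j) θ) =
        ∑ i : Fin n, ∑ j : Fin n, g (x i - x j) θ • Matrix.single i j (1:ℝ) := by
      intro g n θ
      conv_lhs => rw [Matrix.matrix_eq_sum_single (Matrix.of fun i j : Fin n => g (x i - x j) θ)]
      simp [Matrix.smul_single]
    have hder : ∀ n, ∀ θ ∈ U, HasFDerivAt
        (fun θ => (Matrix.of fun i j : Fin n => f (x i - x j) θ : MatF n))
        (∑ i : Fin n, ∑ j : Fin n, (fderiv ℝ (f (x i - x j)) θ).smulRight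
          (Matrix.single i j (1:ℝ) : MatF n)) θ := by
      intro n θ hθ
      simp_rw [e f n]
      exact HasFDerivAt.fun_sum fun i _ => HasFDerivAt.fun_sum fun j _ =>
        (hd _ θ hθ).hasFDerivAt.smul_const _
    refine ⟨⟨K, key h⟩, fun n θ hθ => (hder n θ hθ).differentiableAt, fun j =>
      (ih (hj j)).congr hU ?_⟩
    intro n θ hθ
    rw [(hder n θ hθ).fderiv, e (fun z => pder j (f z))]
    simp [pder]

theorem pder_quad {p n : ℕ} {U : Set (Euc p)} (hU : IsOpen U) {g : Euc p → ℝ}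
    {Q : Euc p → MatF n} {c : ℝ} {y : Fin n → ℝ}
    (hg : ∀ θ ∈ U, g θ = c * (y ⬝ᵥ (Q θ).mulVec y))
    (hd : ∀ θ ∈ U, DifferentiableAt ℝ Q θ) (j : Fin p) :
    ∀ θ ∈ U, pder j g θ =
      c * (y ⬝ᵥ (fderiv ℝ Q θ (EuclideanSpace.single j 1)).mulVec y) := by
  intro θ hθ
  let L : MatF n →ₗ[ℝ] ℝ :=
    { toFun := fun A => c * (y ⬝ᵥ A.mulVec y)
      map_add' := fun A B => by rw [Matrix.add_mulVec, dotProduct_add, mul_add]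
      map_smul' := fun a A => by
        rw [Matrix.smul_mulVec, dotProduct_smul]
        simp only [smul_eq_mul, RingHom.id_apply]; ring }
  have h := (LinearMap.toContinuousLinearMap L).hasFDerivAt.comp θ (hd θ hθ).hasFDerivAt
  have e : g =ᶠ[nhds θ] (LinearMap.toContinuousLinearMap L) ∘ Q := by
    filter_upwards [hU.mem_nhds hθ] with t ht
    exact hg t ht
  rw [pder, e.fderiv_eq, h.fderiv]
  rfl

theorem contDiffAt_pder {p : ℕ} {f : Euc p → ℝ} {θ : Euc p} {m k : WithTop ℕ∞}
    (h : ContDiffAt ℝ m f θ) (hk : k + 1 ≤ m) (j : Fin p) : ContDiffAt ℝ k (pder j f) θ :=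
  (h.fderiv_right hk).clm_apply contDiffAt_const

theorem sqrt_sum_le {p : ℕ} (a : Fin p → ℝ) {K : ℝ} (hK : 0 ≤ K) (h : ∀ j, |a j| ≤ K) :
    √(∑ j, a j ^ 2) ≤ p * K := by
  refine Real.sqrt_le_iff.2 ⟨by positivity, ?_⟩
  calc ∑ j, a j ^ 2 ≤ ∑ j : Fin p, K ^ 2 :=
        Finset.sum_le_sum fun j _ => by rw [← sq_abs]; gcongr; exact h j
    _ = p * K ^ 2 := by simp
    _ ≤ (p * K) ^ 2 := by
      rw [mul_pow]
      refine mul_le_mul_of_nonneg_right ?_ (sq_nonneg _)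
      rcases Nat.eq_zero_or_pos p with h | h
      · simp [h]
      · have : (1:ℝ) ≤ p := by exact_mod_cast h
        nlinarith

/-- `diagPart` as a linear map. -/
def diagL (n : ℕ) : MatF n →L[ℝ] MatF n :=
  LinearMap.toContinuousLinearMap
    { toFun := fun A => diagPart A
      map_add' := fun A B => by simp [diagPart, Matrix.diagonal_add]
      map_smul' := fun a A => by simp [diagPart, Matrix.diagonal_smul] }

theorem diagL_apply {n : ℕ} (A : MatF n) : diagL n A = diagPart A := rfl

theorem diagPart_norm {n : ℕ} (A : MatF n) : ‖diagPart A‖ ≤ ‖A‖ := by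
  rw [diagPart, Matrix.l2_opNorm_diagonal, pi_norm_le_iff_of_nonneg (norm_nonneg _)]
  exact fun i => entry_le A i

theorem coercive_inv {n : ℕ} (R : MatF n) {c : ℝ} (hc : 0 < c)
    (h : ∀ v : Fin n → ℝ, c * (∑ i, v i ^ 2) ≤ v ⬝ᵥ R.mulVec v) :
    R * R⁻¹ = 1 ∧ R⁻¹ * R = 1 ∧ ‖R⁻¹‖ ≤ 1 / c := by
  have hb : ∀ v : Fin n → ℝ, c * √(∑ i, v i ^ 2) ≤ √(∑ i, R.mulVec v i ^ 2) := by
    intro v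
    have h1 := (h v).trans ((le_abs_self _).trans (dot_le _ _))
    have h2 := Real.mul_self_sqrt (Finset.sum_nonneg fun i (_ : i ∈ Finset.univ) => sq_nonneg (v i))
    rcases (Real.sqrt_nonneg (∑ i, v i ^ 2)).eq_or_lt with h0 | h0
    · rw [← h0]; simp
    · refine le_of_mul_le_mul_left ?_ h0
      refine le_trans (le_of_eq ?_) h1
      linear_combination c * h2
  have hu : IsUnit R := by
    rw [← Matrix.mulVec_injective_iff_isUnit]
    intro v w hvw
    have h0 : R.mulVec (v - w) = 0 := by rw [Matrix.mulVec_sub]; exact sub_eq_zero.2 hvw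
    have h1 := h (v - w)
    rw [h0, dotProduct_zero] at h1
    have h2 : ∑ i, (v - w) i ^ 2 = 0 :=
      le_antisymm (by by_contra hh; push Not at hh; nlinarith)
        (Finset.sum_nonneg fun i _ => sq_nonneg _)
    rw [Finset.sum_eq_zero_iff_of_nonneg (fun i _ => sq_nonneg _)] at h2
    funext i
    have := h2 i (Finset.mem_univ i)
    simpa [sub_eq_zero] using this
  have hdet := (Matrix.isUnit_iff_isUnit_det R).1 hu
  refine ⟨Matrix.mul_nonsing_inv R hdet, Matrix.nonsing_inv_mul R hdet,
    norm_le_of_opBound _ (by positivity) fun v => ?_⟩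
  have := hb (R⁻¹.mulVec v)
  rw [Matrix.mulVec_mulVec, Matrix.mul_nonsing_inv R hdet, Matrix.one_mulVec] at this
  rw [one_div, ← div_eq_inv_mul, le_div_iff₀ hc]
  linarith

theorem diag_inv_lower {n : ℕ} (R : MatF n) {c K : ℝ} (hc : 0 < c) (hK : 0 < K) (hR : ‖R‖ ≤ K)
    (h : ∀ v : Fin n → ℝ, c * (∑ i, v i ^ 2) ≤ v ⬝ᵥ R.mulVec v) (i : Fin n) :
    c / K ^ 2 ≤ R⁻¹ i i := by
  obtain ⟨h1, -, -⟩ := coercive_inv R hc h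
  set w := R⁻¹.mulVec (Pi.single i 1) with hw
  have hRw : R.mulVec w = Pi.single i 1 := by rw [hw, Matrix.mulVec_mulVec, h1, Matrix.one_mulVec]
  have h2 := h w
  have h3 := opBound_norm R w
  rw [hRw] at h2 h3
  have h4 : w ⬝ᵥ Pi.single i 1 = R⁻¹ i i := by simp [hw]
  have h5 : √(∑ k, (Pi.single i 1 : Fin n → ℝ) k ^ 2) = 1 := by simp [Pi.single_apply]
  rw [h4] at h2
  rw [h5] at h3
  have h6 : 1 ≤ K * √(∑ i, w i ^ 2) :=
    h3.trans (mul_le_mul_of_nonneg_right hR (Real.sqrt_nonneg _))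
  have h7 : 1 ≤ K ^ 2 * ∑ i, w i ^ 2 := by
    have := Real.sq_sqrt (Finset.sum_nonneg fun i (_ : i ∈ Finset.univ) => sq_nonneg (w i))
    rw [← this, ← mul_pow]
    exact one_le_pow₀ h6
  rw [div_le_iff₀ (by positivity)]
  nlinarith [sq_nonneg K, mul_le_mul_of_nonneg_left h2 (sq_nonneg K)]

theorem diagPart_inv {n : ℕ} (A : MatF n) {δ : ℝ} (hδ : 0 < δ) (h : ∀ i, δ ≤ A i i) :
    diagPart A * (diagPart A)⁻¹ = 1 ∧ (diagPart A)⁻¹ * diagPart A = 1 ∧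
      ‖(diagPart A)⁻¹‖ ≤ 1 / δ := by
  have hpos : ∀ i, 0 < A i i := fun i => hδ.trans_le (h i)
  have e1 : diagPart A * Matrix.diagonal (fun i => (A i i)⁻¹) = 1 := by
    rw [diagPart, Matrix.diagonal_mul_diagonal, ← Matrix.diagonal_one]
    congr 1
    funext i
    exact mul_inv_cancel₀ (hpos i).ne'
  have e2 := Matrix.inv_eq_right_inv e1
  rw [e2]
  refine ⟨e1, mul_eq_one_comm.1 e1, ?_⟩
  rw [Matrix.l2_opNorm_diagonal, pi_norm_le_iff_of_nonneg (by positivity)]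
  intro i
  rw [Real.norm_eq_abs, abs_of_pos (inv_pos.2 (hpos i)), one_div]
  exact inv_anti₀ hδ (h i)

theorem conclude {p : ℕ} {U : Set (Euc p)} (hU : IsOpen U) {Q : ∀ n, Euc p → MatF n}
    (hQ : UB U MatF 3 Q) (M : ∀ n, (Fin n → ℝ) → Euc p → ℝ)
    (hM : ∀ (n : ℕ) (y : Fin n → ℝ), ∀ θ ∈ U, M n y θ = (1 / n : ℝ) * (y ⬝ᵥ (Q n θ).mulVec y)) :
    ∃ C : ℝ, ∀ (n : ℕ) (y : Fin n → ℝ), ∀ θ ∈ U,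
      (Real.sqrt (∑ j, pder j (M n y) θ ^ 2)
          ≤ C * ((1 / n) * ∑ i, y i ^ 2)) ∧
      opBound (Matrix.of fun j k : Fin p => pder k (pder j (M n y)) θ)
        (C * ((1 / n) * ∑ i, y i ^ 2)) ∧
      ∀ j k l : Fin p,
        |pder l (pder k (pder j (M n y))) θ|
          ≤ C * ((1 / n) * ∑ i, y i ^ 2) := by
  obtain ⟨-, hd0, h1⟩ := hQ
  choose b1 hd1 h2 using h1
  choose K1 hK1 using b1
  choose b2 hd2 h3 using h2
  choose K2 hK2 using b2
  choose K3 hK3 using h3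
  have e1 := fun n y j => pder_quad hU (hM n y) (hd0 n) j
  have e2 := fun n y j k => pder_quad hU (e1 n y j) (hd1 j n) k
  have e3 := fun n y j k l => pder_quad hU (e2 n y j k) (hd2 j k n) l
  set B : ℝ := ∑ j, |K1 j| + ∑ j, ∑ k, |K2 j k| + ∑ j, ∑ k, ∑ l, |K3 j k l| with hB
  have n1 : 0 ≤ ∑ j, |K1 j| := by positivity
  have n2 : 0 ≤ ∑ j, ∑ k, |K2 j k| := by positivity
  have n3 : 0 ≤ ∑ j, ∑ k, ∑ l, |K3 j k l| := by positivity
  have hB0 : 0 ≤ B := by positivity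
  have m1 : ∀ j, K1 j ≤ B := fun j => by
    have a := Finset.single_le_sum (fun j _ => abs_nonneg (K1 j)) (Finset.mem_univ j)
    have := le_abs_self (K1 j)
    linarith
  have m2 : ∀ j k, K2 j k ≤ B := fun j k => by
    have a := Finset.single_le_sum (f := fun j => ∑ k, |K2 j k|)
      (fun j _ => by positivity) (Finset.mem_univ j)
    have a' := Finset.single_le_sum (fun k _ => abs_nonneg (K2 j k)) (Finset.mem_univ k)
    have := le_abs_self (K2 j k)
    linarith
  have m3 : ∀ j k l, K3 j k l ≤ B := fun j k l => by
    have a := Finset.single_le_sum (f := fun j => ∑ k, ∑ l, |K3 j k l|)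
      (fun j _ => by positivity) (Finset.mem_univ j)
    have a' := Finset.single_le_sum (f := fun k => ∑ l, |K3 j k l|)
      (fun j _ => by positivity) (Finset.mem_univ k)
    have a'' := Finset.single_le_sum (fun l _ => abs_nonneg (K3 j k l)) (Finset.mem_univ l)
    have := le_abs_self (K3 j k l)
    linarith
  have q : ∀ (n : ℕ) (y : Fin n → ℝ) (A : MatF n), ‖A‖ ≤ B →
      |(1 / n : ℝ) * (y ⬝ᵥ A.mulVec y)| ≤ B * ((1 / n) * ∑ i, y i ^ 2) := by
    intro n y A hA
    rw [abs_mul, abs_of_nonneg (by positivity : (0:ℝ) ≤ 1 / n)]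
    have h := (quad_le A y).trans (mul_le_mul_of_nonneg_right hA (by positivity))
    have h' := mul_le_mul_of_nonneg_left h (by positivity : (0:ℝ) ≤ 1 / n)
    linarith
  refine ⟨(p + 1) * B, fun n y θ hθ => ?_⟩
  have hT : 0 ≤ B * ((1 / n : ℝ) * ∑ i, y i ^ 2) := by positivity
  set T := B * ((1 / n : ℝ) * ∑ i, y i ^ 2) with hTdef
  have hC : ((p : ℝ) + 1) * B * ((1 / n : ℝ) * ∑ i, y i ^ 2) = p * T + T := by
    rw [hTdef]; ring
  have hpT : 0 ≤ p * T := by positivity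
  rw [hC]
  have g2 : ∀ j k, |pder k (pder j (M n y)) θ| ≤ T := fun j k => by
    rw [e2 n y j k θ hθ]
    exact q n y _ ((hK2 j k n θ hθ).trans (m2 j k))
  refine ⟨?_, ?_, fun j k l => ?_⟩
  · refine (sqrt_sum_le _ hT fun j => ?_).trans (by linarith)
    rw [e1 n y j θ hθ]
    exact q n y _ ((hK1 j n θ hθ).trans (m1 j))
  · refine schur_opBound _ (by positivity) (fun j => ?_) fun k => ?_
    · refine (Finset.sum_le_sum fun k _ => g2 j k).trans ?_
      simp only [Finset.sum_const, Finset.card_univ, Fintype.card_fin, nsmul_eq_mul]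
      linarith
    · refine (Finset.sum_le_sum fun j _ => g2 j k).trans ?_
      simp only [Finset.sum_const, Finset.card_univ, Fintype.card_fin, nsmul_eq_mul]
      linarith
  · rw [e3 n y j k l θ hθ]
    exact (q n y _ ((hK3 j k l n θ hθ).trans (m3 j k l))).trans (by linarith)

theorem CV_aux
    {d p : ℕ} (Θ : Set (Euc p))
    (x : ℕ → Euc d) (kern : Euc p → Euc d → ℝ)
    -- Condition 10 (minimal distance between observation points)
    (cx : ℝ) (hcx : 0 < cx) (hmindist : ∀ i j : ℕ, i ≠ j → cx ≤ ‖x i - x j‖)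
    -- Condition 11 (uniformly positive definite correlation matrices)
    (cR1 : ℝ) (hcR1 : 0 < cR1)
    (heigR : ∀ (n : ℕ), ∀ θ ∈ Θ, ∀ v : Fin n → ℝ,
      cR1 * (∑ i, v i ^ 2) ≤ v ⬝ᵥ (Rmat x kern n θ).mulVec v)
    -- Condition 12 (third-order smoothness in θ and decay of the correlation)
    (hsmooth : ∀ z : Euc d, ∀ θ ∈ interior Θ, ContDiffAt ℝ 3 (fun θ' => kern θ' z) θ)
    (CR2 cR2 : ℝ) (hCR2 : 0 < CR2) (hcR2 : 0 < cR2)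
    (hdecay : ∀ θ ∈ Θ, ∀ z : Euc d,
      |kern θ z| ≤ CR2 / (1 + ‖z‖ ^ ((d : ℝ) + cR2)))
    (hdecay1 : ∀ θ ∈ interior Θ, ∀ (z : Euc d) (j : Fin p),
      |pder j (fun θ' => kern θ' z) θ| ≤ CR2 / (1 + ‖z‖ ^ ((d : ℝ) + cR2)))
    (hdecay2 : ∀ θ ∈ interior Θ, ∀ (z : Euc d) (j k : Fin p),
      |pder k (pder j fun θ' => kern θ' z) θ| ≤ CR2 / (1 + ‖z‖ ^ ((d : ℝ) + cR2)))
    (hdecay3 : ∀ θ ∈ interior Θ, ∀ (z : Euc d) (j k l : Fin p),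
      |pder l (pder k (pder j fun θ' => kern θ' z)) θ|
        ≤ CR2 / (1 + ‖z‖ ^ ((d : ℝ) + cR2)))
    : ∃ C : ℝ, ∀ (n : ℕ) (y : Fin n → ℝ), ∀ θ ∈ interior Θ,
      (Real.sqrt (∑ j, pder j (CVcrit x kern n y) θ ^ 2)
          ≤ C * ((1 / n) * ∑ i, y i ^ 2)) ∧
      opBound (Matrix.of fun j k : Fin p => pder k (pder j (CVcrit x kern n y)) θ)
        (C * ((1 / n) * ∑ i, y i ^ 2)) ∧
      ∀ j k l : Fin p,
        |pder l (pder k (pder j (CVcrit x kern n y))) θ|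
          ≤ C * ((1 / n) * ∑ i, y i ^ 2) := by
  classical
  set U := interior Θ with hUdef
  have hU : IsOpen U := isOpen_interior
  have hUΘ : ∀ θ ∈ U, θ ∈ Θ := fun θ h => interior_subset h
  obtain ⟨K₀, hK₀, hpack⟩ := packing x cx hcx hmindist ((d : ℝ) + cR2) (by linarith)
  have hr : ∀ n i : ℕ, ∑ j : Fin n, CR2 / (1 + ‖x i - x j‖ ^ ((d : ℝ) + cR2)) ≤ CR2 * K₀ := by
    intro n i
    have := mul_le_mul_of_nonneg_left (hpack n i) hCR2.le
    rw [Finset.mul_sum] at this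
    simpa only [mul_one_div] using this
  have hEB : EB U (fun z : Euc d => CR2 / (1 + ‖z‖ ^ ((d : ℝ) + cR2))) 3
      (fun z θ => kern θ z) := by
    refine ⟨fun z θ h => hdecay θ (hUΘ θ h) z,
      fun z θ h => (hsmooth z θ h).differentiableAt (by norm_num), fun j => ?_⟩
    have hs1 : ∀ z, ∀ θ ∈ U, ContDiffAt ℝ 2 (pder j fun θ' => kern θ' z) θ := fun z θ h =>
      contDiffAt_pder (hsmooth z θ h) (by norm_num) j
    refine ⟨fun z θ h => hdecay1 θ h z j,
      fun z θ h => (hs1 z θ h).differentiableAt (by norm_num), fun k => ?_⟩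
    have hs2 : ∀ z, ∀ θ ∈ U, ContDiffAt ℝ 1 (pder k (pder j fun θ' => kern θ' z)) θ :=
      fun z θ h => contDiffAt_pder (hs1 z θ h) (by norm_num) k
    exact ⟨fun z θ h => hdecay2 θ h z j k,
      fun z θ h => (hs2 z θ h).differentiableAt (by norm_num),
      fun l z θ h => hdecay3 θ h z j k l⟩
  have hR : UB U MatF 3 (fun n θ => Rmat x kern n θ) :=
    UB_of_EB hU x (mul_nonneg hCR2.le hK₀) hr
      (fun n i => by simp_rw [norm_sub_rev _ (x i)]; exact hr n i) hEB
  obtain ⟨K₁, hK₁⟩ := hR.bdd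
  have hinv := fun n θ (hθ : θ ∈ U) => coercive_inv (Rmat x kern n θ) hcR1 (heigR n θ (hUΘ θ hθ))
  have : ∀ n, CompleteSpace (MatF n) := fun n => FiniteDimensional.complete ℝ (MatF n)
  have hRi : UB U MatF 3 (fun n θ => (Rmat x kern n θ)⁻¹) :=
    hR.inv hU (fun n θ h => (hinv n θ h).1) (fun n θ h => (hinv n θ h).2.1)
      ⟨_, fun n θ h => (hinv n θ h).2.2⟩
  have hD : UB U MatF 3 (fun n θ => diagPart (Rmat x kern n θ)⁻¹) :=
    hRi.clm hU diagL (M := 1) (fun n a => by rw [one_mul]; exact diagPart_norm a) zero_le_one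
  have hδ : 0 < cR1 / (|K₁| + 1) ^ 2 := by positivity
  have hdinv := fun n θ (hθ : θ ∈ U) => diagPart_inv (Rmat x kern n θ)⁻¹ hδ
    (diag_inv_lower (Rmat x kern n θ) hcR1 (by positivity)
      ((hK₁ n θ hθ).trans ((le_abs_self _).trans (by linarith))) (heigR n θ (hUΘ θ hθ)))
  have hDi : UB U MatF 3 (fun n θ => (diagPart (Rmat x kern n θ)⁻¹)⁻¹) :=
    hD.inv hU (fun n θ h => (hdinv n θ h).1) (fun n θ h => (hdinv n θ h).2.1)
      ⟨_, fun n θ h => (hdinv n θ h).2.2⟩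
  exact conclude hU ((hRi.mul hU (hDi.mul hU hDi)).mul hU hRi) (fun n y => CVcrit x kern n y)
    (fun n y θ _ => by rw [CVcrit, pow_two])

end CVhelpers

/-- Lemma C.5: derivatives of the cross-validation criterion of orders 1, 2, 3
are uniformly bounded by `C ‖y‖²/n`. -/
theorem CV_derivative_bounds
    {d p : ℕ} (Θ : Set (Euc p)) (hΘcompact : IsCompact Θ)
    (x : ℕ → Euc d) (kern : Euc p → Euc d → ℝ)
    -- Condition 10 (minimal distance between observation points)
    (cx : ℝ) (hcx : 0 < cx) (hmindist : ∀ i j : ℕ, i ≠ j → cx ≤ ‖x i - x j‖)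
    -- Condition 11 (uniformly positive definite correlation matrices)
    (cR1 : ℝ) (hcR1 : 0 < cR1)
    (heigR : ∀ (n : ℕ), ∀ θ ∈ Θ, ∀ v : Fin n → ℝ,
      cR1 * (∑ i, v i ^ 2) ≤ v ⬝ᵥ (Rmat x kern n θ).mulVec v)
    -- Condition 12 (third-order smoothness in θ and decay of the correlation)
    (hsmooth : ∀ z : Euc d, ∀ θ ∈ interior Θ, ContDiffAt ℝ 3 (fun θ' => kern θ' z) θ)
    (CR2 cR2 : ℝ) (hCR2 : 0 < CR2) (hcR2 : 0 < cR2)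
    (hdecay : ∀ θ ∈ Θ, ∀ z : Euc d,
      |kern θ z| ≤ CR2 / (1 + ‖z‖ ^ ((d : ℝ) + cR2)))
    (hdecay1 : ∀ θ ∈ interior Θ, ∀ (z : Euc d) (j : Fin p),
      |pder j (fun θ' => kern θ' z) θ| ≤ CR2 / (1 + ‖z‖ ^ ((d : ℝ) + cR2)))
    (hdecay2 : ∀ θ ∈ interior Θ, ∀ (z : Euc d) (j k : Fin p),
      |pder k (pder j fun θ' => kern θ' z) θ| ≤ CR2 / (1 + ‖z‖ ^ ((d : ℝ) + cR2)))
    (hdecay3 : ∀ θ ∈ interior Θ, ∀ (z : Euc d) (j k l : Fin p),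
      |pder l (pder k (pder j fun θ' => kern θ' z)) θ|
        ≤ CR2 / (1 + ‖z‖ ^ ((d : ℝ) + cR2)))
    : ∃ C : ℝ, ∀ (n : ℕ) (y : Fin n → ℝ), ∀ θ ∈ interior Θ,
      (Real.sqrt (∑ j, pder j (CVcrit x kern n y) θ ^ 2)
          ≤ C * ((1 / n) * ∑ i, y i ^ 2)) ∧
      opBound (Matrix.of fun j k : Fin p => pder k (pder j (CVcrit x kern n y)) θ)
        (C * ((1 / n) * ∑ i, y i ^ 2)) ∧
      ∀ j k l : Fin p,
        |pder l (pder k (pder j (CVcrit x kern n y))) θ|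
          ≤ C * ((1 / n) * ∑ i, y i ^ 2) := by
  exact CV_aux Θ x kern cx hcx hmindist cR1 hcR1 heigR hsmooth CR2 cR2 hCR2 hcR2 hdecay hdecay1
    hdecay2 hdecay3
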